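/- Let n ≥ 2 and let k ≥ 2 be even. If a tensor state u in (ℂ^n)^{⊗k} has rank strictly less than n, then P_{n,k}(u) = 0. -/

import Mathlib

/-!
Expanding a sum of `s` decomposable tensors inside `genDet` gives a sum over maps
`f : Fin n → Fin s`, where the summand of `f` factors over the tensor slots. Every slot other
than the first contributes the determinant of the matrix whose `h`-th column is the vector
`w (f h) j`. If `s < n`, then `f` is not injective, so that determinant has two equal columns and
vanishes; since `k ≥ 2`, such a slot exists.
-/

/-- The generalized determinant `P_{n,k}`:
`P_{n,k}(u) = Σ_{σ₂,…,σ_k ∈ S_n} ε(σ₂)⋯ε(σ_k) ∏_{h=1}^{n} u^{h σ₂(h) ⋯ σ_k(h)}`,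
encoded as a sum over tuples `σ : Fin k → Perm (Fin n)` with `σ 0 = 1`. -/
noncomputable def genDet (n k : ℕ) (u : (Fin k → Fin n) → ℂ) : ℂ :=
  ∑ σ ∈ Finset.univ.filter
      (fun σ : Fin k → Equiv.Perm (Fin n) => ∀ j : Fin k, (j : ℕ) = 0 → σ j = 1),
    ((∏ j, (Equiv.Perm.sign (σ j) : ℤ)) : ℂ) * ∏ h : Fin n, u (fun j => σ j h)

/-- The rank of a tensor state `u` in `(ℂ^n)^{⊗k}`: the smallest `s` such that `u` is a
sum of `s` decomposable tensor states. -/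
noncomputable def tensorRank {n k : ℕ} (u : (Fin k → Fin n) → ℂ) : ℕ :=
  sInf {s : ℕ | ∃ w : Fin s → Fin k → Fin n → ℂ, u = fun p => ∑ i, ∏ j, w i j (p j)}

/-- Every tensor with at least one slot is a finite sum of decomposable tensors, so that the
infimum defining `tensorRank` is attained and is not the junk value `sInf ∅ = 0`. -/
theorem exists_decomposition {n k : ℕ} (hk : 0 < k) (u : (Fin k → Fin n) → ℂ) :
    ∃ s : ℕ, ∃ w : Fin s → Fin k → Fin n → ℂ, u = fun p => ∑ i, ∏ j, w i j (p j) := by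
  let e := (Fintype.equivFin (Fin k → Fin n)).symm
  -- The basis tensors, with the coefficient `u (e i)` absorbed into the first slot.
  refine ⟨_, fun i j a => (if e i j = a then 1 else 0) * (if j = ⟨0, hk⟩ then u (e i) else 1), ?_⟩
  funext p
  rw [Equiv.sum_comp e (fun q : Fin k → Fin n => ∏ j, ((if q j = p j then (1 : ℂ) else 0) *
    (if j = ⟨0, hk⟩ then u q else 1)))]
  simp only [Finset.prod_mul_distrib, Finset.prod_ite_zero, Finset.mem_univ, forall_const,
    fun q : Fin k → Fin n => (funext_iff (f := q) (g := p)).symm]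
  simp

/-- The signed sum over permutations attached to one slot is a determinant with two equal
columns. -/
theorem slot_sum_eq_zero {n s : ℕ} (hs : s < n) (f : Fin n → Fin s) (v : Fin s → Fin n → ℂ) :
    ∑ τ : Equiv.Perm (Fin n), ((Equiv.Perm.sign τ : ℤ) : ℂ) * ∏ h, v (f h) (τ h) = 0 := by
  obtain ⟨a, b, hab, hf⟩ := Fintype.exists_ne_map_eq_of_card_lt f (by simpa using hs)
  have hdet : (Matrix.of fun p h => v (f h) p).det = 0 :=
    Matrix.det_zero_of_column_eq hab (by simp [hf])
  simpa [Matrix.det_apply'] using hdet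

theorem genDet_sum_eq_zero {n k s : ℕ} (hk : 2 ≤ k) (hs : s < n)
    (w : Fin s → Fin k → Fin n → ℂ) :
    genDet n k (fun p => ∑ i, ∏ j, w i j (p j)) = 0 := by
  have hfilter : (Finset.univ.filter
      (fun σ : Fin k → Equiv.Perm (Fin n) => ∀ j : Fin k, (j : ℕ) = 0 → σ j = 1)) =
      Fintype.piFinset (fun j : Fin k => if (j : ℕ) = 0 then {1} else Finset.univ) := by
    ext σ
    simp only [Finset.mem_filter, Finset.mem_univ, true_and, Fintype.mem_piFinset]
    refine forall_congr' fun j => ?_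
    split_ifs with h <;> simp [h]
  unfold genDet
  rw [hfilter]
  simp_rw [Fintype.prod_sum, Finset.mul_sum]
  rw [Finset.sum_comm]
  refine Finset.sum_eq_zero fun f _ => ?_
  have hfactor : ∀ σ : Fin k → Equiv.Perm (Fin n),
      ((∏ j, (Equiv.Perm.sign (σ j) : ℤ)) : ℂ) * ∏ h, ∏ j, w (f h) j (σ j h) =
      ∏ j, (((Equiv.Perm.sign (σ j) : ℤ) : ℂ) * ∏ h, w (f h) j (σ j h)) := by
    intro σ
    rw [Finset.prod_comm, Finset.prod_mul_distrib]
  simp_rw [hfactor]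
  rw [← Finset.prod_univ_sum (fun j : Fin k => if (j : ℕ) = 0 then {1} else Finset.univ)
    (fun j (τ : Equiv.Perm (Fin n)) => ((Equiv.Perm.sign τ : ℤ) : ℂ) * ∏ h, w (f h) j (τ h))]
  refine Finset.prod_eq_zero (Finset.mem_univ (⟨1, hk⟩ : Fin k)) ?_
  simpa using slot_sum_eq_zero hs f (fun i => w i ⟨1, hk⟩)

/-- For `k ≥ 2` even, if a tensor state `u` in `(ℂ^n)^{⊗k}` has rank strictly less than
`n`, then `P_{n,k}(u) = 0`. -/
theorem stmt6 (n k : ℕ) (hn : 2 ≤ n) (hk : 2 ≤ k) (heven : Even k)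
    (u : (Fin k → Fin n) → ℂ) (hrank : tensorRank u < n) :
    genDet n k u = 0 := by
  obtain ⟨w, hw⟩ := Nat.sInf_mem (exists_decomposition (by omega : 0 < k) u)
  rw [hw]
  exact genDet_sum_eq_zero hk hrank w
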